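/- On a probability space, let f and ε be independent real-valued random variables with f distributed as the Gaussian measure with mean μ and variance σ² (σ > 0) and ε distributed as the Gaussian with mean 0 and variance σ_n² (σ_n > 0), let y = f + ε, fix f∘ ∈ ℝ, and let γ = 1 if f < f∘ and γ = −1 otherwise. Then the mutual information I(y; γ) equals ∫ [ Φ(g(v, f∘))·log( Φ(g(v, f∘)) / Φ(h(f∘)) ) + Φ(−g(v, f∘))·log( Φ(−g(v, f∘)) / Φ(−h(f∘)) ) ] dν(v), where ν is the Gaussian measure with mean μ and variance σ² + σ_n² (the law of y), g(v, c) = ((σ² + σ_n²)·c − σ_n²·μ − σ²·v)/(σ·σ_n·√(σ² + σ_n²)), and h(c) = (c − μ)/σ. -/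

import Mathlib

open MeasureTheory ProbabilityTheory Real

/-- The standard Gaussian cumulative distribution function `Φ`. -/
noncomputable def stdGaussianCDF (t : ℝ) : ℝ :=
  (gaussianReal 0 1 (Set.Iic t)).toReal

/-- The binary entropy function `H_b` (natural logarithm, with `0 · log 0 = 0`). -/
noncomputable def binEnt (p : ℝ) : ℝ :=
  - (p * Real.log p) - (1 - p) * Real.log (1 - p)

/-- Kullback–Leibler divergence between two measures. -/
noncomputable def klDiv {α : Type*} [MeasurableSpace α] (μ ν : Measure α) : ℝ :=
  ∫ x, Real.log (μ.rnDeriv ν x).toReal ∂μ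

/-- Mutual information between two random variables: the KL divergence between the joint law
and the product of the marginal laws. -/
noncomputable def mutualInfo {Ω α β : Type*} [MeasurableSpace Ω] [MeasurableSpace α]
    [MeasurableSpace β] (P : Measure Ω) (A : Ω → α) (B : Ω → β) : ℝ :=
  klDiv (P.map (fun ω => (A ω, B ω))) ((P.map A).prod (P.map B))

open scoped ENNReal NNReal

lemma bes_gauss_std (m τ : ℝ) (hτ : 0 < τ) :
    (gaussianReal m (Real.toNNReal (τ ^ 2))).map (fun x => (x - m) / τ) = gaussianReal 0 1 := by
  have h1 := gaussianReal_map_sub_const (μ := m) (v := Real.toNNReal (τ ^ 2)) m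
  have h2 := gaussianReal_map_div_const (μ := m - m) (v := Real.toNNReal (τ ^ 2)) τ
  rw [← h1, Measure.map_map (by fun_prop) (by fun_prop)] at h2
  have : (fun x : ℝ => x / τ) ∘ (fun x => x - m) = fun x => (x - m) / τ := rfl
  rw [this] at h2
  rw [h2]
  congr 1
  · simp
  · have hτ2 : 0 ≤ τ ^ 2 := by positivity
    ext
    have h3 : τ ^ 2 ≠ 0 := by positivity
    simp only [NNReal.coe_div, Real.coe_toNNReal _ hτ2, NNReal.coe_mk, NNReal.coe_one]
    exact div_self h3

lemma bes_Iio (m τ t : ℝ) (hτ : 0 < τ) :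
    gaussianReal m (Real.toNNReal (τ ^ 2)) (Set.Iio t) =
      gaussianReal 0 1 (Set.Iic ((t - m) / τ)) := by
  have : NullSingletonClass (gaussianReal 0 1) := nullSingletonClass_gaussianReal one_ne_zero
  rw [← measure_congr (Iio_ae_eq_Iic (μ := gaussianReal 0 1)), ← bes_gauss_std m τ hτ,
    Measure.map_apply (by fun_prop) measurableSet_Iio]
  congr 1
  ext x
  simp [div_lt_div_iff_of_pos_right hτ]

lemma bes_Ici (m τ t : ℝ) (hτ : 0 < τ) :
    gaussianReal m (Real.toNNReal (τ ^ 2)) (Set.Ici t) =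
      gaussianReal 0 1 (Set.Iic (-((t - m) / τ))) := by
  have h : gaussianReal 0 1 = (gaussianReal 0 1).map (fun x : ℝ => -x) := by
    rw [gaussianReal_map_neg]; simp
  rw [h, Measure.map_apply (by fun_prop) measurableSet_Iic, ← bes_gauss_std m τ hτ,
    Measure.map_apply (by fun_prop) (measurableSet_Iic.preimage (by fun_prop))]
  congr 1
  ext x
  simp [div_le_div_iff_of_pos_right hτ]

lemma bes_cdf_pos (t : ℝ) : 0 < stdGaussianCDF t := by
  unfold stdGaussianCDF
  refine ENNReal.toReal_pos ?_ (measure_ne_top _ _)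
  intro h
  have := gaussianReal_absolutelyContinuous' 0 (one_ne_zero (α := ℝ≥0)) h
  simp at this

lemma bes_cdf_le (t : ℝ) : stdGaussianCDF t ≤ 1 := by
  unfold stdGaussianCDF
  exact ENNReal.toReal_le_of_le_ofReal zero_le_one (by simpa using prob_le_one)

lemma bes_cdf_ofReal (t : ℝ) :
    ENNReal.ofReal (stdGaussianCDF t) = gaussianReal 0 1 (Set.Iic t) := by
  unfold stdGaussianCDF
  exact ENNReal.ofReal_toReal (measure_ne_top _ _)

lemma bes_cdf_meas : Measurable stdGaussianCDF := by
  apply Monotone.measurable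
  intro a b hab
  unfold stdGaussianCDF
  exact ENNReal.toReal_mono (measure_ne_top _ _) (measure_mono (Set.Iic_subset_Iic.2 hab))

lemma bes_int (ν : Measure ℝ) [IsProbabilityMeasure ν] (a : ℝ → ℝ) (ha : Measurable a)
    (h0 : ∀ v, 0 < a v) (h1 : ∀ v, a v ≤ 1) (p : ℝ) (hp : 0 < p) :
    Integrable (fun v => a v * Real.log (a v / p)) ν := by
  have hc : Continuous (fun x : ℝ => x * Real.log x - x * Real.log p) :=
    Real.continuous_mul_log.sub (by fun_prop)
  obtain ⟨C, hC⟩ := (isCompact_Icc (a := (0:ℝ)) (b := 1)).exists_bound_of_continuousOn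
    hc.continuousOn
  refine Integrable.of_bound (by fun_prop) C (ae_of_all _ fun v => ?_)
  rw [Real.log_div (h0 v).ne' hp.ne', mul_sub]
  exact hC (a v) ⟨(h0 v).le, h1 v⟩

lemma bes_map_wd (ν : Measure ℝ) (c : ℝ) (p : ℝ≥0∞) (a : ℝ → ℝ≥0∞) (r : ℝ × ℝ → ℝ≥0∞)
    (hr : Measurable r) (h : ∀ v, p * r (v, c) = a v) :
    (p • ν.map (fun v => (v, c))).withDensity r = (ν.withDensity a).map (fun v => (v, c)) := by
  ext S hS
  rw [withDensity_apply _ hS, Measure.map_apply (by fun_prop) hS,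
    withDensity_apply _ (hS.preimage (by fun_prop)), Measure.restrict_smul, lintegral_smul_measure,
    setLIntegral_map hS hr (by fun_prop), smul_eq_mul, ← lintegral_const_mul _ (by fun_prop)]
  simp [h]

lemma bes_kl (ν : Measure ℝ) [IsProbabilityMeasure ν] (a b : ℝ → ℝ) (ha : Measurable a)
    (hb : Measurable b) (ha0 : ∀ v, 0 < a v) (ha1 : ∀ v, a v ≤ 1) (hb0 : ∀ v, 0 < b v)
    (hb1 : ∀ v, b v ≤ 1) (p q : ℝ) (hp : 0 < p) (hq : 0 < q) :
    klDiv ((ν.withDensity (fun v => ENNReal.ofReal (a v))).map (fun v => (v, (1:ℝ))) +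
        (ν.withDensity (fun v => ENNReal.ofReal (b v))).map (fun v => (v, (-1:ℝ))))
      (ν.prod (ENNReal.ofReal p • Measure.dirac (1:ℝ) + ENNReal.ofReal q • Measure.dirac (-1:ℝ)))
      = ∫ v, (a v * Real.log (a v / p) + b v * Real.log (b v / q)) ∂ν := by
  set r : ℝ × ℝ → ℝ := fun x => if x.2 = 1 then a x.1 / p else b x.1 / q with hrdef
  have hr : Measurable r := by
    refine Measurable.ite (measurable_snd (measurableSet_singleton 1)) ?_ ?_ <;> fun_prop
  have hlr : Measurable (fun x => Real.log (r x)) := Real.measurable_log.comp hr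
  have hr0 : ∀ x, 0 < r x := by
    intro x
    simp only [hrdef]
    split_ifs
    · exact div_pos (ha0 _) hp
    · exact div_pos (hb0 _) hq
  have : IsFiniteMeasure (ENNReal.ofReal p • Measure.dirac (1:ℝ)) :=
    Measure.smul_finite _ ENNReal.ofReal_ne_top
  have : IsFiniteMeasure (ENNReal.ofReal q • Measure.dirac (-1:ℝ)) :=
    Measure.smul_finite _ ENNReal.ofReal_ne_top
  set R := ν.prod (ENNReal.ofReal p • Measure.dirac (1:ℝ) + ENNReal.ofReal q • Measure.dirac (-1:ℝ))
    with hR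
  have hR' : R = ENNReal.ofReal p • ν.map (fun v => (v, (1:ℝ))) +
      ENNReal.ofReal q • ν.map (fun v => (v, (-1:ℝ))) := by
    rw [hR, Measure.prod_add, Measure.prod_smul_right, Measure.prod_smul_right,
      Measure.prod_dirac, Measure.prod_dirac]
  set J := (ν.withDensity (fun v => ENNReal.ofReal (a v))).map (fun v => (v, (1:ℝ))) +
        (ν.withDensity (fun v => ENNReal.ofReal (b v))).map (fun v => (v, (-1:ℝ))) with hJ
  have hJR : J = R.withDensity (fun x => ENNReal.ofReal (r x)) := by
    rw [hR', withDensity_add_measure, hJ]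
    congr 1
    · refine (bes_map_wd ν 1 _ _ _ (by fun_prop) fun v => ?_).symm
      rw [← ENNReal.ofReal_mul hp.le]
      congr 1
      simp [hrdef]
      field_simp
    · refine (bes_map_wd ν (-1) _ _ _ (by fun_prop) fun v => ?_).symm
      rw [← ENNReal.ofReal_mul hq.le]
      congr 1
      have : (-1 : ℝ) ≠ 1 := by norm_num
      simp [hrdef, this]
      field_simp
  have hrn : J.rnDeriv R =ᵐ[J] fun x => ENNReal.ofReal (r x) := by
    have h := Measure.rnDeriv_withDensity R (f := fun x => ENNReal.ofReal (r x)) (by fun_prop)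
    rw [← hJR] at h
    have hac : J ≪ R := by rw [hJR]; exact withDensity_absolutelyContinuous _ _
    exact hac.ae_eq h
  unfold klDiv
  have e1 : ∫ x, Real.log (J.rnDeriv R x).toReal ∂J = ∫ x, Real.log (r x) ∂J := by
    refine integral_congr_ae ?_
    filter_upwards [hrn] with x hx
    rw [hx, ENNReal.toReal_ofReal (hr0 x).le]
  have key : ∀ (c : ℝ) (a : ℝ → ℝ) (p : ℝ), Measurable a → (∀ v, 0 < a v) → (∀ v, a v ≤ 1) →
      0 < p → (∀ v, r (v, c) = a v / p) →
      Integrable (fun x => Real.log (r x))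
        ((ν.withDensity (fun v => ENNReal.ofReal (a v))).map (fun v => (v, c))) ∧
      ∫ x, Real.log (r x) ∂((ν.withDensity (fun v => ENNReal.ofReal (a v))).map (fun v => (v, c)))
        = ∫ v, a v * Real.log (a v / p) ∂ν := by
    intro c a p ha ha0 ha1 hp h
    constructor
    · rw [integrable_map_measure hlr.aestronglyMeasurable (by fun_prop),
        integrable_withDensity_iff_integrable_smul' (by fun_prop) (by simp)]
      simpa [h, ENNReal.toReal_ofReal (ha0 _).le] using bes_int ν a ha ha0 ha1 p hp
    · rw [integral_map (by fun_prop) hlr.aestronglyMeasurable,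
        integral_withDensity_eq_integral_toReal_smul (by fun_prop) (by simp)]
      simp [h, ENNReal.toReal_ofReal (ha0 _).le]
  obtain ⟨i1, j1⟩ := key 1 a p ha ha0 ha1 hp (by simp [hrdef])
  obtain ⟨i2, j2⟩ := key (-1) b q hb hb0 hb1 hq (by
    have : (-1 : ℝ) ≠ 1 := by norm_num
    simp [hrdef, this])
  rw [e1, hJ, integral_add_measure i1 i2, j1, j2,
    integral_add (bes_int ν a ha ha0 ha1 p hp) (bes_int ν b hb hb0 hb1 q hq)]

/-- The residual `f - E[f | y]` is independent of `y`, with the posterior Gaussian law. -/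
lemma bes_indep {Ω : Type*} [MeasurableSpace Ω]
    (P : Measure Ω) [IsProbabilityMeasure P]
    (f ε : Ω → ℝ) (hf : Measurable f) (hε : Measurable ε)
    (hindep : IndepFun f ε P) (μ σ σn : ℝ) (hσ : 0 < σ) (hσn : 0 < σn)
    (hfl : P.map f = gaussianReal μ (Real.toNNReal (σ ^ 2)))
    (hεl : P.map ε = gaussianReal 0 (Real.toNNReal (σn ^ 2)))
    (z : Ω → ℝ)
    (hz : z = fun ω => σn ^ 2 / (σ ^ 2 + σn ^ 2) * f ω - σ ^ 2 / (σ ^ 2 + σn ^ 2) * ε ω) :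
    P.map (fun ω => ((f + ε) ω, z ω)) = (gaussianReal μ (Real.toNNReal (σ ^ 2 + σn ^ 2))).prod
      (gaussianReal (σn ^ 2 / (σ ^ 2 + σn ^ 2) * μ)
        (Real.toNNReal ((σ * σn / √(σ ^ 2 + σn ^ 2)) ^ 2))) := by
  have hs : 0 < σ ^ 2 + σn ^ 2 := by positivity
  have gf : HasGaussianLaw f P := ⟨by rw [hfl]; infer_instance⟩
  have ge : HasGaussianLaw ε P := ⟨by rw [hεl]; infer_instance⟩
  have gfe := hindep.hasGaussianLaw gf ge
  set A := σn ^ 2 / (σ ^ 2 + σn ^ 2) with hA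
  set B := σ ^ 2 / (σ ^ 2 + σn ^ 2) with hB
  have lf : HasLaw f (gaussianReal μ (Real.toNNReal (σ ^ 2))) P := ⟨hf.aemeasurable, hfl⟩
  have le : HasLaw ε (gaussianReal 0 (Real.toNNReal (σn ^ 2))) P := ⟨hε.aemeasurable, hεl⟩
  have gyz : HasGaussianLaw (fun ω => ((f + ε) ω, z ω)) P := by
    have := gfe.map_fun ((ContinuousLinearMap.fst ℝ ℝ ℝ + ContinuousLinearMap.snd ℝ ℝ ℝ).prod
      (A • ContinuousLinearMap.fst ℝ ℝ ℝ - B • ContinuousLinearMap.snd ℝ ℝ ℝ))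
    simpa [hz] using this
  have vf : Var[f; P] = σ ^ 2 := by
    rw [lf.variance_eq]; simp [variance_id_gaussianReal, sq_nonneg]
  have ve : Var[ε; P] = σn ^ 2 := by
    rw [le.variance_eq]; simp [variance_id_gaussianReal, sq_nonneg]
  have mf := gf.memLp_two
  have me := ge.memLp_two
  have cfe : cov[f, ε; P] = 0 := hindep.covariance_eq_zero mf me
  have cef : cov[ε, f; P] = 0 := by rw [covariance_comm, cfe]
  have hz' : z = A • f - B • ε := by rw [hz]; rfl
  have hcov : cov[f + ε, z; P] = 0 := by
    rw [hz', covariance_sub_right (mf.add me) (mf.const_smul A) (me.const_smul B),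
      covariance_add_left mf me (mf.const_smul A), covariance_add_left mf me (me.const_smul B)]
    simp only [covariance_smul_right, cfe, cef, covariance_self hf.aemeasurable,
      covariance_self hε.aemeasurable, vf, ve]
    simp only [hA, hB]; field_simp; ring
  have hind : IndepFun (f + ε) z P := gyz.indepFun_of_covariance_eq_zero hcov
  have hzm : Measurable z := by rw [hz]; fun_prop
  rw [(indepFun_iff_map_prod_eq_prod_map_map (by fun_prop) (by fun_prop)).1 hind,
    gaussianReal_add_gaussianReal_of_indepFun hindep hfl hεl,
    ← Real.toNNReal_add (by positivity) (by positivity), add_zero]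
  congr 1
  have l1 := gaussianReal_const_mul lf A
  have l2 := gaussianReal_const_mul le (-B)
  have i12 : IndepFun (fun ω => A * f ω) (fun ω => -B * ε ω) P :=
    hindep.comp (φ := fun x => A * x) (ψ := fun x => -B * x) (by fun_prop) (by fun_prop)
  have hsum := gaussianReal_add_gaussianReal_of_indepFun i12 l1.map_eq l2.map_eq
  have : (fun ω => A * f ω) + (fun ω => -B * ε ω) = z := by
    rw [hz]; ext ω; simp; ring
  rw [this] at hsum
  rw [hsum]
  congr 1
  · simp
  · ext
    have : 0 ≤ (σ * σn / √(σ ^ 2 + σn ^ 2)) ^ 2 := sq_nonneg _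
    simp only [NNReal.coe_add, NNReal.coe_mul, NNReal.coe_mk, Real.coe_toNNReal _ (sq_nonneg _)]
    rw [div_pow (σ * σn), Real.sq_sqrt hs.le, hA, hB]
    field_simp
    ring

/-- Closed form of the BES criterion. For independent `f ~ N(μ, σ²)` and
`ε ~ N(0, σ_n²)`, `y = f + ε`, threshold `f∘`, and class label `γ = 1` if `f < f∘`
else `-1`, the mutual information `I(y; γ)` equals
`∫ [Φ(g(v,f∘)) log(Φ(g(v,f∘))/Φ(h(f∘))) + Φ(-g(v,f∘)) log(Φ(-g(v,f∘))/Φ(-h(f∘)))] dν(v)`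
with `ν = N(μ, σ² + σ_n²)`, `g(v,c) = ((σ²+σ_n²)c - σ_n²μ - σ²v)/(σ σ_n √(σ²+σ_n²))`,
`h(c) = (c - μ)/σ`. -/
theorem bes_closed_form {Ω : Type*} [MeasurableSpace Ω]
    (P : Measure Ω) [IsProbabilityMeasure P]
    (f ε : Ω → ℝ) (hf : Measurable f) (hε : Measurable ε)
    (hindep : IndepFun f ε P) (μ σ σn : ℝ) (hσ : 0 < σ) (hσn : 0 < σn)
    (hfl : P.map f = gaussianReal μ (Real.toNNReal (σ ^ 2)))
    (hεl : P.map ε = gaussianReal 0 (Real.toNNReal (σn ^ 2)))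
    (f₀ : ℝ) :
    mutualInfo P (f + ε) (fun ω => if f ω < f₀ then (1 : ℝ) else -1) =
      ∫ v,
        (stdGaussianCDF (((σ ^ 2 + σn ^ 2) * f₀ - σn ^ 2 * μ - σ ^ 2 * v) /
            (σ * σn * Real.sqrt (σ ^ 2 + σn ^ 2))) *
          Real.log
            (stdGaussianCDF (((σ ^ 2 + σn ^ 2) * f₀ - σn ^ 2 * μ - σ ^ 2 * v) /
                (σ * σn * Real.sqrt (σ ^ 2 + σn ^ 2))) /
              stdGaussianCDF ((f₀ - μ) / σ)) +
          stdGaussianCDF (-(((σ ^ 2 + σn ^ 2) * f₀ - σn ^ 2 * μ - σ ^ 2 * v) /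
            (σ * σn * Real.sqrt (σ ^ 2 + σn ^ 2)))) *
          Real.log
            (stdGaussianCDF (-(((σ ^ 2 + σn ^ 2) * f₀ - σn ^ 2 * μ - σ ^ 2 * v) /
                (σ * σn * Real.sqrt (σ ^ 2 + σn ^ 2)))) /
              stdGaussianCDF (-((f₀ - μ) / σ))))
        ∂(gaussianReal μ (Real.toNNReal (σ ^ 2 + σn ^ 2))) := by
  have hs : 0 < σ ^ 2 + σn ^ 2 := by positivity
  have hsq : 0 < √(σ ^ 2 + σn ^ 2) := Real.sqrt_pos.2 hs
  set g : ℝ → ℝ := fun v => ((σ ^ 2 + σn ^ 2) * f₀ - σn ^ 2 * μ - σ ^ 2 * v) /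
            (σ * σn * Real.sqrt (σ ^ 2 + σn ^ 2)) with hg
  set ν := gaussianReal μ (Real.toNNReal (σ ^ 2 + σn ^ 2)) with hν
  set τ := σ * σn / √(σ ^ 2 + σn ^ 2) with hτdef
  have hτ : 0 < τ := by positivity
  set B := σ ^ 2 / (σ ^ 2 + σn ^ 2) with hB
  set m := σn ^ 2 / (σ ^ 2 + σn ^ 2) * μ with hm
  set ρ := gaussianReal m (Real.toNNReal (τ ^ 2)) with hρ
  set z : Ω → ℝ :=
    fun ω => σn ^ 2 / (σ ^ 2 + σn ^ 2) * f ω - σ ^ 2 / (σ ^ 2 + σn ^ 2) * ε ω with hz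
  have hyz : P.map (fun ω => ((f + ε) ω, z ω)) = ν.prod ρ :=
    bes_indep P f ε hf hε hindep μ σ σn hσ hσn hfl hεl z hz
  have hzm : Measurable z := by rw [hz]; fun_prop
  have hym : Measurable (f + ε) := hf.add hε
  have hfz : ∀ ω, f ω < f₀ ↔ z ω < f₀ - B * (f + ε) ω := by
    intro ω
    have : z ω = f ω - B * (f + ε) ω := by
      simp only [hz, hB, Pi.add_apply]
      field_simp
      ring
    rw [this]
    constructor <;> intro h <;> linarith
  have hgt : ∀ v, (f₀ - B * v - m) / τ = g v := by
    intro v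
    have h2 : √(σ ^ 2 + σn ^ 2) ^ 2 = σ ^ 2 + σn ^ 2 := Real.sq_sqrt hs.le
    simp only [hg, hB, hm, hτdef]
    rw [div_div_eq_mul_div, div_eq_div_iff (by positivity) (by positivity)]
    field_simp
    rw [h2]
    ring
  have hρ1 : ∀ v, ρ (Set.Iio (f₀ - B * v)) = ENNReal.ofReal (stdGaussianCDF (g v)) := by
    intro v
    rw [hρ, bes_Iio _ _ _ hτ, hgt, bes_cdf_ofReal]
  have hρ2 : ∀ v, ρ (Set.Ici (f₀ - B * v)) = ENNReal.ofReal (stdGaussianCDF (-g v)) := by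
    intro v
    rw [hρ, bes_Ici _ _ _ hτ, hgt, bes_cdf_ofReal]
  have hgm : Measurable g := by rw [hg]; fun_prop
  have hyl : P.map (f + ε) = ν := by
    have := gaussianReal_add_gaussianReal_of_indepFun hindep hfl hεl
    rwa [← Real.toNNReal_add (by positivity) (by positivity), add_zero] at this
  set γ : Ω → ℝ := fun ω => if f ω < f₀ then (1 : ℝ) else -1 with hγ
  have hlt : MeasurableSet {ω | f ω < f₀} := measurableSet_lt hf measurable_const
  have hγm : Measurable γ := Measurable.ite hlt measurable_const measurable_const
  have hγl : P.map γ = ENNReal.ofReal (stdGaussianCDF ((f₀ - μ) / σ)) • Measure.dirac (1:ℝ) +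
      ENNReal.ofReal (stdGaussianCDF (-((f₀ - μ) / σ))) • Measure.dirac (-1:ℝ) := by
    rw [bes_cdf_ofReal, bes_cdf_ofReal, ← bes_Iio _ _ _ hσ, ← bes_Ici _ _ _ hσ, ← hfl,
      Measure.map_apply hf measurableSet_Iio, Measure.map_apply hf measurableSet_Ici]
    ext S hS
    rw [Measure.map_apply hγm hS, ← measure_inter_add_sdiff (γ ⁻¹' S) hlt]
    simp only [Measure.add_apply, Measure.smul_apply, smul_eq_mul, Measure.dirac_apply' _ hS]
    congr 1
    · by_cases h : (1:ℝ) ∈ S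
      · simp only [h, Set.indicator_of_mem, Pi.one_apply, mul_one]
        congr 1; ext ω
        simp only [Set.mem_inter_iff, Set.mem_preimage, Set.mem_ofPred_eq, Set.mem_Iio, hγ]
        constructor
        · exact fun h => h.2
        · intro h'; simp [h', h]
      · simp only [h, not_false_eq_true, Set.indicator_of_notMem, mul_zero]
        convert measure_empty (μ := P)
        ext ω
        simp only [Set.mem_inter_iff, Set.mem_preimage, Set.mem_ofPred_eq, hγ]
        constructor
        · rintro ⟨h1, h2⟩; simp [h2, h] at h1
        · exact fun h => h.elim
    · by_cases h : (-1:ℝ) ∈ S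
      · simp only [h, Set.indicator_of_mem, Pi.one_apply, mul_one]
        congr 1; ext ω
        simp only [Set.mem_sdiff, Set.mem_preimage, Set.mem_ofPred_eq, Set.mem_Ici, hγ]
        constructor
        · exact fun h => not_lt.1 h.2
        · intro h'; simp [not_lt.2 h', h]
      · simp only [h, not_false_eq_true, Set.indicator_of_notMem, mul_zero]
        convert measure_empty (μ := P)
        ext ω
        simp only [Set.mem_sdiff, Set.mem_preimage, Set.mem_ofPred_eq, hγ]
        constructor
        · rintro ⟨h1, h2⟩; simp [h2, h] at h1
        · exact fun h => h.elim
  have hJ : P.map (fun ω => ((f + ε) ω, γ ω)) =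
      (ν.withDensity (fun v => ENNReal.ofReal (stdGaussianCDF (g v)))).map
        (fun v => (v, (1:ℝ))) +
      (ν.withDensity (fun v => ENNReal.ofReal (stdGaussianCDF (-g v)))).map
        (fun v => (v, (-1:ℝ))) := by
    ext S hS
    have hS1 : MeasurableSet ((fun v : ℝ => (v, (1:ℝ))) ⁻¹' S) := hS.preimage (by fun_prop)
    have hS2 : MeasurableSet ((fun v : ℝ => (v, (-1:ℝ))) ⁻¹' S) := hS.preimage (by fun_prop)
    rw [Measure.map_apply (hym.prodMk hγm) hS, ← measure_inter_add_sdiff _ hlt, Measure.add_apply,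
      Measure.map_apply (by fun_prop) hS, Measure.map_apply (by fun_prop) hS,
      withDensity_apply _ hS1, withDensity_apply _ hS2]
    have hltm : MeasurableSet {x : ℝ × ℝ | x.2 < f₀ - B * x.1} :=
      measurableSet_lt (by fun_prop) (by fun_prop)
    congr 1
    · set T : Set (ℝ × ℝ) := {x | (x.1, (1:ℝ)) ∈ S ∧ x.2 < f₀ - B * x.1} with hT
      have hTm : MeasurableSet T :=
        (hS1.preimage measurable_fst).inter hltm
      have e : (fun ω => ((f + ε) ω, γ ω)) ⁻¹' S ∩ {ω | f ω < f₀} =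
          (fun ω => ((f + ε) ω, z ω)) ⁻¹' T := by
        ext ω
        simp only [Set.mem_inter_iff, Set.mem_preimage, Set.mem_ofPred_eq, hT, ← hfz]
        refine and_congr_left fun h => ?_
        simp [hγ, h]
      rw [e, ← Measure.map_apply (hym.prodMk hzm) hTm, hyz, Measure.prod_apply hTm,
        ← lintegral_indicator hS1]
      refine lintegral_congr fun v => ?_
      by_cases h : (v, (1:ℝ)) ∈ S
      · rw [Set.indicator_of_mem (by exact h), ← hρ1]
        congr 1; ext w; simp [hT, h]
      · rw [Set.indicator_of_notMem (by exact h)]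
        convert measure_empty (μ := ρ)
        ext w; simp [hT, h]
    · set T : Set (ℝ × ℝ) := {x | (x.1, (-1:ℝ)) ∈ S ∧ ¬ x.2 < f₀ - B * x.1} with hT
      have hTm : MeasurableSet T :=
        (hS2.preimage measurable_fst).inter
          hltm.compl
      have e : (fun ω => ((f + ε) ω, γ ω)) ⁻¹' S \ {ω | f ω < f₀} =
          (fun ω => ((f + ε) ω, z ω)) ⁻¹' T := by
        ext ω
        simp only [Set.mem_sdiff, Set.mem_preimage, Set.mem_ofPred_eq, hT, ← hfz]
        refine and_congr_left fun h => ?_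
        simp only [hγ, if_neg h]
      rw [e, ← Measure.map_apply (hym.prodMk hzm) hTm, hyz, Measure.prod_apply hTm,
        ← lintegral_indicator hS2]
      refine lintegral_congr fun v => ?_
      by_cases h : (v, (-1:ℝ)) ∈ S
      · rw [Set.indicator_of_mem (by exact h), ← hρ2]
        congr 1; ext w; simp [hT, h]
      · rw [Set.indicator_of_notMem (by exact h)]
        convert measure_empty (μ := ρ)
        ext w; simp [hT, h]
  unfold mutualInfo
  rw [hJ, hyl, hγl]
  exact bes_kl ν (fun v => stdGaussianCDF (g v)) (fun v => stdGaussianCDF (-g v))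
    (bes_cdf_meas.comp hgm) (bes_cdf_meas.comp hgm.neg) (fun _ => bes_cdf_pos _)
    (fun _ => bes_cdf_le _) (fun _ => bes_cdf_pos _) (fun _ => bes_cdf_le _) _ _
    (bes_cdf_pos _) (bes_cdf_pos _)
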